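/- With $f$, $t_+$ as in the context: $\dfrac{1}{f'(t_+(x))\, t_+(x)^2} = \dfrac{1}{4 x^{3/2}} + O\big(x^{-1/2}\big)$ as $x \to 0^+$. (Up to sign, this quantity is the derivative $\Theta_{x_2}((0,x),(1,0))$ of the Funk metric.) -/

import Mathlib

open Filter Topology Asymptotics

/-! Put `m = f''(0) / 2` and `b = f'''(0) / 6`. Taylor's theorem gives `f t = t² p(t)` and
`f' t = t q(t)` with `p = m + b t + O(t²)` and `q = 2 m + 3 b t + O(t²)`, so that
`1 / (f' t * t²) - √m / (2 f(t)^(3/2)) = t⁻³ (1 / q - (√m / 2) p^(-3/2))`.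
The bracket vanishes to first order: `1 / q` and `(√m / 2) p^(-3/2)` both expand as
`1 / (2 m) - (3 b / (4 m²)) t + O(t²)`. Hence the difference is `O(t⁻¹)`, which is
`O(f(t)^(-1/2))`. -/

section Taylor

open scoped Nat

variable {E : Type*} [NormedAddCommGroup E] [NormedSpace ℝ E]

theorem isBigO_sub_taylor_of_contDiffAt {f : ℝ → E} {x₀ : ℝ} {n : ℕ}
    (hf : ContDiffAt ℝ (n + 1) f x₀) :
    (fun x ↦ f x - ∑ k ∈ Finset.range (n + 1), ((k ! : ℝ)⁻¹ * (x - x₀) ^ k) • iteratedDeriv k f x₀)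
      =O[𝓝 x₀] fun x ↦ (x - x₀) ^ (n + 1) := by
  obtain ⟨s, hs, hfs⟩ := hf.contDiffOn le_rfl (by simp)
  obtain ⟨r, hr, hrs⟩ := Metric.mem_nhds_iff.1 (by simpa using hs)
  have hx₀ : x₀ ∈ Metric.ball x₀ r := Metric.mem_ball_self hr
  have remainder := (taylor_isLittleO (n := n + 1) (convex_ball x₀ r) hx₀
    (by exact_mod_cast hfs.mono hrs)).isBigO
  rw [Metric.isOpen_ball.nhdsWithin_eq hx₀] at remainder
  simp only [taylor_within_apply, iteratedDerivWithin_of_isOpen Metric.isOpen_ball hx₀,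
    Finset.sum_range_succ _ (n + 1)] at remainder
  have top_term : (fun x ↦ (((n + 1)! : ℝ)⁻¹ * (x - x₀) ^ (n + 1)) • iteratedDeriv (n + 1) f x₀)
      =O[𝓝 x₀] fun x ↦ (x - x₀) ^ (n + 1) := by
    simpa using ((isBigO_refl (fun x ↦ (x - x₀) ^ (n + 1)) _).const_mul_left _).smul
      (isBigO_const_const (iteratedDeriv (n + 1) f x₀) (one_ne_zero (α := ℝ)) _)
  exact (remainder.add top_term).congr_left fun x ↦ by abel

theorem isBigO_sub_of_isBigO_sub_affine {u : ℝ → ℝ} {l : Filter ℝ} {a b : ℝ} (hl : l ≤ 𝓝 0)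
    (hu : (fun t ↦ u t - (a + b * t)) =O[l] fun t ↦ t ^ 2) :
    (fun t ↦ u t - a) =O[l] fun t ↦ t := by
  have sq_isBigO : (fun t : ℝ ↦ t ^ 2) =O[l] fun t ↦ t := by
    simpa using ((isLittleO_pow_pow (𝕜 := ℝ) one_lt_two).isBigO).mono hl
  exact ((hu.trans sq_isBigO).add ((isBigO_refl _ _).const_mul_left b)).congr_left fun t ↦ by ring

theorem tendsto_of_isBigO_sub_affine {u : ℝ → ℝ} {l : Filter ℝ} {a b : ℝ} (hl : l ≤ 𝓝 0)
    (hu : (fun t ↦ u t - (a + b * t)) =O[l] fun t ↦ t ^ 2) : Tendsto u l (𝓝 a) :=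
  tendsto_sub_nhds_zero_iff.1 ((isBigO_sub_of_isBigO_sub_affine hl hu).trans_tendsto hl)

theorem isBigO_comp_sub_affine {g : ℝ → E} {u : ℝ → ℝ} {l : Filter ℝ} {a b : ℝ}
    (hg : ContDiffAt ℝ 2 g a) (hl : l ≤ 𝓝 0)
    (hu : (fun t ↦ u t - (a + b * t)) =O[l] fun t ↦ t ^ 2) :
    (fun t ↦ g (u t) - (g a + (b * t) • deriv g a)) =O[l] fun t ↦ t ^ 2 := by
  have outer : (fun t ↦ g (u t) - (g a + (u t - a) • deriv g a)) =O[l] fun t ↦ t ^ 2 := by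
    have taylor := (isBigO_sub_taylor_of_contDiffAt (n := 1) (by exact_mod_cast hg)).comp_tendsto
      (tendsto_of_isBigO_sub_affine hl hu)
    simpa [Function.comp_def, Finset.sum_range_succ] using
      taylor.trans ((isBigO_sub_of_isBigO_sub_affine hl hu).pow 2)
  have inner : (fun t ↦ (u t - (a + b * t)) • deriv g a) =O[l] fun t ↦ t ^ 2 := by
    simpa using hu.smul (isBigO_const_const (deriv g a) (one_ne_zero (α := ℝ)) l)
  refine (outer.add inner).congr_left fun t ↦ ?_
  module

end Taylor

theorem exists_isBigO_sub_cubic_of_deriv_eq_zero {f : ℝ → ℝ} (hf : ContDiffAt ℝ 4 f 0)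
    (hf0 : f 0 = 0) (hf1 : deriv f 0 = 0) :
    ∃ b : ℝ,
      (fun t ↦ f t - (deriv (deriv f) 0 / 2 * t ^ 2 + b * t ^ 3)) =O[𝓝 0] (fun t ↦ t ^ 4) ∧
      (fun t ↦ deriv f t - (deriv (deriv f) 0 * t + 3 * b * t ^ 2)) =O[𝓝 0] fun t ↦ t ^ 3 := by
  have hf' : ContDiffAt ℝ 3 (deriv f) 0 := hf.derivWithin (by norm_num)
  have expand_f := isBigO_sub_taylor_of_contDiffAt (n := 3) (by exact_mod_cast hf)
  have expand_deriv := isBigO_sub_taylor_of_contDiffAt (n := 2) (by exact_mod_cast hf')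
  simp only [Finset.sum_range_succ, Finset.sum_range_zero, iteratedDeriv_succ', iteratedDeriv_zero,
    hf0, hf1, sub_zero, smul_eq_mul, Nat.factorial] at expand_f expand_deriv
  refine ⟨deriv (deriv (deriv f)) 0 / 6, expand_f.congr_left fun t ↦ ?_,
    expand_deriv.congr_left fun t ↦ ?_⟩
  all_goals push_cast; ring

section QuadraticVanishing

variable {m b : ℝ}

theorem isBigO_inv_sub_rpow {p q : ℝ → ℝ} {l : Filter ℝ} (hm : 0 < m) (hl : l ≤ 𝓝 0)
    (hp : (fun t ↦ p t - (m + b * t)) =O[l] fun t ↦ t ^ 2)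
    (hq : (fun t ↦ q t - (2 * m + 3 * b * t)) =O[l] fun t ↦ t ^ 2) :
    (fun t ↦ (q t)⁻¹ - √m / 2 * p t ^ (-(3 / 2) : ℝ)) =O[l] fun t ↦ t ^ 2 := by
  have inv_expansion := isBigO_comp_sub_affine (contDiffAt_inv ℝ (by positivity)) hl hq
  have rpow_expansion := isBigO_comp_sub_affine
    (Real.contDiffAt_rpow_const_of_ne (p := -(3 / 2)) hm.ne') hl hp
  refine (inv_expansion.sub (rpow_expansion.const_mul_left (√m / 2))).congr_left fun t ↦ ?_
  have coeff_zero : √m * m ^ (-(3 / 2) : ℝ) = m⁻¹ := by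
    rw [Real.sqrt_eq_rpow, ← Real.rpow_add hm, ← Real.rpow_neg_one]; norm_num
  have coeff_one : √m * m ^ (-(3 / 2) - 1 : ℝ) = (m ^ 2)⁻¹ := by
    rw [Real.sqrt_eq_rpow, ← Real.rpow_add hm, ← Real.rpow_natCast, ← Real.rpow_neg hm.le]; norm_num
  simp only [deriv_inv, Real.deriv_rpow_const, smul_eq_mul]
  linear_combination (1 / 2) * coeff_zero - (3 / 4) * b * t * coeff_one

theorem one_div_mul_sq_sub_div_rpow {t y z c : ℝ} (ht : 0 < t) (hy : 0 ≤ y) :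
    1 / (z * t ^ 2) - c / (2 * y ^ (3 / 2 : ℝ)) =
      ((z / t)⁻¹ - c / 2 * (y / t ^ 2) ^ (-(3 / 2) : ℝ)) * (t ^ 3)⁻¹ := by
  have t_cube : (t ^ 2) ^ (3 / 2 : ℝ) = t ^ 3 := by
    rw [← Real.rpow_natCast_mul ht.le, ← Real.rpow_natCast]; norm_num
  rw [Real.rpow_neg (by positivity), Real.div_rpow hy (by positivity), t_cube]
  field_simp

theorem isBigO_one_div_mul_sq_sub_div_rpow {f g : ℝ → ℝ} (hm : 0 < m)
    (hf : (fun t ↦ f t - (m * t ^ 2 + b * t ^ 3)) =O[𝓝[>] 0] fun t ↦ t ^ 4)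
    (hg : (fun t ↦ g t - (2 * m * t + 3 * b * t ^ 2)) =O[𝓝[>] 0] fun t ↦ t ^ 3) :
    (fun t ↦ 1 / (g t * t ^ 2) - √m / (2 * f t ^ (3 / 2 : ℝ)))
      =O[𝓝[>] 0] fun t ↦ f t ^ (-(1 / 2) : ℝ) := by
  have hl : 𝓝[>] (0 : ℝ) ≤ 𝓝 0 := nhdsWithin_le_nhds
  have t_pos : ∀ᶠ t : ℝ in 𝓝[>] 0, 0 < t := self_mem_nhdsWithin
  have hp : (fun t ↦ f t / t ^ 2 - (m + b * t)) =O[𝓝[>] 0] fun t ↦ t ^ 2 := by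
    refine (hf.mul (isBigO_refl (fun t ↦ (t ^ 2)⁻¹) _)).congr' ?_ ?_ <;>
      filter_upwards [t_pos] with t ht <;> field_simp
  have hq : (fun t ↦ g t / t - (2 * m + 3 * b * t)) =O[𝓝[>] 0] fun t ↦ t ^ 2 := by
    refine (hg.mul (isBigO_refl (fun t ↦ t⁻¹) _)).congr' ?_ ?_ <;>
      filter_upwards [t_pos] with t ht <;> field_simp
  have p_tendsto := tendsto_of_isBigO_sub_affine hl hp
  have f_pos : ∀ᶠ t in 𝓝[>] 0, 0 < f t := by
    filter_upwards [t_pos, p_tendsto.eventually_const_lt hm] with t ht hpt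
    exact (div_pos_iff_of_pos_right (by positivity)).1 hpt
  calc (fun t ↦ 1 / (g t * t ^ 2) - √m / (2 * f t ^ (3 / 2 : ℝ)))
    _ =ᶠ[𝓝[>] 0] fun t ↦
        ((g t / t)⁻¹ - √m / 2 * (f t / t ^ 2) ^ (-(3 / 2) : ℝ)) * (t ^ 3)⁻¹ := by
      filter_upwards [t_pos, f_pos] with t ht hft
      exact one_div_mul_sq_sub_div_rpow ht hft.le
    _ =O[𝓝[>] 0] fun t ↦ t ^ 2 * (t ^ 3)⁻¹ :=
      (isBigO_inv_sub_rpow hm hl hp hq).mul (isBigO_refl _ _)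
    _ =ᶠ[𝓝[>] 0] fun t ↦ (f t / t ^ 2) ^ (1 / 2 : ℝ) * f t ^ (-(1 / 2) : ℝ) := by
      filter_upwards [t_pos, f_pos] with t ht hft
      rw [Real.rpow_neg hft.le, ← Real.sqrt_eq_rpow, ← Real.sqrt_eq_rpow, Real.sqrt_div hft.le,
        Real.sqrt_sq ht.le]
      field_simp
    _ =O[𝓝[>] 0] fun t ↦ f t ^ (-(1 / 2) : ℝ) := by
      simpa using ((p_tendsto.rpow_const (Or.inl hm.ne')).isBigO_one ℝ).mul (isBigO_refl _ _)

end QuadraticVanishing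

theorem stmt_11_general (f tp : ℝ → ℝ) (hf : ContDiffAt ℝ 4 f 0) (hf0 : f 0 = 0)
    (hf1 : deriv f 0 = 0) (hf2 : 0 < deriv (deriv f) 0)
    (htp : ∀ᶠ x in 𝓝[>] (0 : ℝ), 0 < tp x ∧ f (tp x) = x)
    (htp0 : Tendsto tp (𝓝[>] (0 : ℝ)) (𝓝 0)) :
    (fun x ↦ 1 / (deriv f (tp x) * tp x ^ 2)
        - √(deriv (deriv f) 0 / 2) / (2 * x ^ (3 / 2 : ℝ)))
      =O[𝓝[>] (0 : ℝ)] fun x ↦ x ^ (-(1 / 2) : ℝ) := by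
  obtain ⟨b, expand_f, expand_deriv⟩ := exists_isBigO_sub_cubic_of_deriv_eq_zero hf hf0 hf1
  have tp_tendsto : Tendsto tp (𝓝[>] 0) (𝓝[>] 0) :=
    tendsto_nhdsWithin_iff.2 ⟨htp0, htp.mono fun _ hx ↦ hx.1⟩
  have asymptotics_at_root := (isBigO_one_div_mul_sq_sub_div_rpow (half_pos hf2)
    (expand_f.mono nhdsWithin_le_nhds)
    ((expand_deriv.mono nhdsWithin_le_nhds).congr_left fun t ↦ by ring)).comp_tendsto tp_tendsto
  refine asymptotics_at_root.congr' ?_ ?_ <;>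
    filter_upwards [htp] with x ⟨_, hx⟩ <;> simp only [Function.comp_apply, hx]

theorem stmt_11 (f tp tm : ℝ → ℝ)
    (hf : ContDiffAt ℝ 4 f 0)
    (hf0 : f 0 = 0) (hf1 : deriv f 0 = 0) (hf2 : deriv (deriv f) 0 = 1/2)
    (hfpos : ∀ᶠ t in 𝓝 (0:ℝ), 0 < deriv (deriv f) t)
    (htp : ∀ᶠ x in 𝓝[>] (0:ℝ), 0 < tp x ∧ f (tp x) = x)
    (htm : ∀ᶠ x in 𝓝[>] (0:ℝ), tm x < 0 ∧ f (tm x) = x)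
    (htp0 : Tendsto tp (𝓝[>] (0:ℝ)) (𝓝 0))
    (htm0 : Tendsto tm (𝓝[>] (0:ℝ)) (𝓝 0)) :
    (fun x => 1 / (deriv f (tp x) * (tp x) ^ 2) - 1 / (4 * x ^ (3/2 : ℝ)))
      =O[𝓝[>] (0:ℝ)] fun x => x ^ (-(1/2) : ℝ) := by
  have sqrt_quarter : √(1 / 2 / 2 : ℝ) = 1 / 2 := by
    rw [Real.sqrt_eq_iff_mul_self_eq (by norm_num) (by norm_num)]; norm_num
  refine (stmt_11_general f tp hf hf0 hf1 (by norm_num [hf2]) htp htp0).congr_left fun x ↦ ?_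
  rw [hf2, sqrt_quarter]
  ring
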